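/- If Q is an extreme point of the convex set L (viewed as a subset of the real vector space of all maps X* → X*), then for every ω ∈ Ω the measure Qδ(ω) is a φ-ergodic Borel probability measure. -/

import Mathlib

open MeasureTheory Filter Topology

/-- The pairing `⟨f, μ⟩ = ∫ f dμ` of a function with a finite signed Borel measure,
defined via the Jordan decomposition of the signed measure. -/
noncomputable def spair {Ω : Type*} [MeasurableSpace Ω] (f : Ω → ℝ) (μ : SignedMeasure Ω) : ℝ :=
  (∫ ω, f ω ∂μ.toJordanDecomposition.posPart) - (∫ ω, f ω ∂μ.toJordanDecomposition.negPart)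

/-- The weak* topology on the space `X*` of finite signed Borel measures, i.e. the topology
of convergence of the pairings with all continuous functions `x ∈ C(Ω, ℝ)`. With this topology
on the codomain, the product topology on `SignedMeasure Ω → SignedMeasure Ω` is precisely the
weak* operator topology (pointwise convergence with `X*` in its weak* topology). -/
noncomputable instance weakStarTopology {Ω : Type*} [TopologicalSpace Ω] [MeasurableSpace Ω] :
    TopologicalSpace (SignedMeasure Ω) :=
  TopologicalSpace.induced (fun μ => fun x : C(Ω, ℝ) => spair (⇑x) μ) inferInstance

/-- The operator `V : X* → X*`, pushforward by `φ`: `(Vμ)(e) = μ(φ⁻¹ e)`. -/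
noncomputable def Vop {Ω : Type*} [MeasurableSpace Ω] (φ : Ω → Ω) :
    SignedMeasure Ω → SignedMeasure Ω :=
  fun μ => μ.map φ

/-- The Dirac measure at `ω`, as a signed measure. -/
noncomputable def diracSM {Ω : Type*} [MeasurableSpace Ω] (ω : Ω) : SignedMeasure Ω :=
  (Measure.dirac ω).toSignedMeasure

/-- `Γ(Ω,φ)`: the closure of `{Vⁿ : n ≥ 0}` in the weak* operator topology. -/
def GammaSG {Ω : Type*} [TopologicalSpace Ω] [MeasurableSpace Ω] (φ : Ω → Ω) :
    Set (SignedMeasure Ω → SignedMeasure Ω) :=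
  closure (Set.range fun n : ℕ => (Vop φ)^[n])

/-- `G(Ω,φ)`: the closure of the convex hull of `{Vⁿ : n ≥ 0}` in the weak* operator topology. -/
def GSG {Ω : Type*} [TopologicalSpace Ω] [MeasurableSpace Ω] (φ : Ω → Ω) :
    Set (SignedMeasure Ω → SignedMeasure Ω) :=
  closure (convexHull ℝ (Set.range fun n : ℕ => (Vop φ)^[n]))

/-- The kernel `L = {Q ∈ G(Ω,φ) : V ∘ Q = Q}` of the semigroup `G(Ω,φ)`. -/
def Lker {Ω : Type*} [TopologicalSpace Ω] [MeasurableSpace Ω] (φ : Ω → Ω) :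
    Set (SignedMeasure Ω → SignedMeasure Ω) :=
  {Q ∈ GSG φ | Vop φ ∘ Q = Q}

/-- The Ellis enveloping semigroup `E(Ω,φ)`: the closure of the iterates `{φⁿ : n ≥ 0}`
in the product topology (pointwise convergence) on `Ω → Ω`. -/
def EllisE {Ω : Type*} [TopologicalSpace Ω] (φ : Ω → Ω) : Set (Ω → Ω) :=
  closure (Set.range fun n : ℕ => φ^[n])

/-- `E_b(Ω,φ)`: the smallest set of self-maps of `Ω` containing the iterates `{φⁿ : n ≥ 0}`
and sequentially closed under pointwise convergence. -/
inductive Eb {Ω : Type*} [TopologicalSpace Ω] (φ : Ω → Ω) : (Ω → Ω) → Prop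
  | iterate (n : ℕ) : Eb φ φ^[n]
  | lim (p : ℕ → Ω → Ω) (q : Ω → Ω) (hp : ∀ k, Eb φ (p k))
      (hq : ∀ ω, Tendsto (fun k => p k ω) atTop (𝓝 (q ω))) : Eb φ q

/-- `E₁(Ω,φ)`: the set of pointwise limits of sequences of iterates `φ^{n_k}`. -/
def E1SG {Ω : Type*} [TopologicalSpace Ω] (φ : Ω → Ω) : Set (Ω → Ω) :=
  {p | ∃ n : ℕ → ℕ, ∀ ω, Tendsto (fun k => φ^[n k] ω) atTop (𝓝 (p ω))}

/-- An operator `P ∈ Γ(Ω,φ)` with `p = πP` is regular if `p` is Borel measurable and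
`(Pμ)(e) = μ(p⁻¹ e)` for every Borel probability measure `μ` and Borel set `e`. -/
def RegularOperator {Ω : Type*} [TopologicalSpace Ω] [MeasurableSpace Ω]
    (P : SignedMeasure Ω → SignedMeasure Ω) (p : Ω → Ω) : Prop :=
  Measurable p ∧ ∀ (μ : Measure Ω) [IsProbabilityMeasure μ],
    ∀ e : Set Ω, MeasurableSet e → P μ.toSignedMeasure e = (μ (p ⁻¹' e)).toReal

/-- A minimal set of the semicascade `(Ω,φ)`: a nonempty closed `φ`-invariant set containing
no proper nonempty closed `φ`-invariant subset. -/
def IsMinimalSet {Ω : Type*} [TopologicalSpace Ω] (φ : Ω → Ω) (m : Set Ω) : Prop :=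
  m.Nonempty ∧ IsClosed m ∧ Set.MapsTo φ m m ∧
    ∀ m' ⊆ m, m'.Nonempty → IsClosed m' → Set.MapsTo φ m' m' → m' = m

/-- The orbit closure of a point `ω`: the closure of the trajectory `{φⁿ ω : n ≥ 0}`. -/
def orbitClosure {Ω : Type*} [TopologicalSpace Ω] (φ : Ω → Ω) (ω : Ω) : Set Ω :=
  closure (Set.range fun n : ℕ => φ^[n] ω)

/-- A `φ`-ergodic measure: a `φ`-invariant Borel probability measure `μ` such that
`μ(e) ∈ {0,1}` for every Borel set `e` with `φ⁻¹ e = e`. -/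
def IsErgodicMeasure {Ω : Type*} [MeasurableSpace Ω] (φ : Ω → Ω) (μ : Measure Ω) : Prop :=
  IsProbabilityMeasure μ ∧ (∀ e : Set Ω, MeasurableSet e → μ (φ ⁻¹' e) = μ e) ∧
    (∀ e : Set Ω, MeasurableSet e → φ ⁻¹' e = e → μ e = 0 ∨ μ e = 1)

/-- The support of a Borel measure: the smallest closed set of full measure
(the intersection of all closed sets of full measure). -/
def msupp {Ω : Type*} [TopologicalSpace Ω] [MeasurableSpace Ω] (μ : Measure Ω) : Set Ω :=
  ⋂₀ {s : Set Ω | IsClosed s ∧ μ sᶜ = 0}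

/-- The semicascade `(Ω,φ)` is tame: for every continuous `x` and every strictly increasing
sequence `n(1) < n(2) < ⋯`, the infimum over finitely supported real coefficients `a` with
`Σ|aₖ| = 1` of the sup-norms `‖Σₖ aₖ · (x ∘ φ^{n(k)})‖` is `0`. -/
def Tame {Ω : Type*} [TopologicalSpace Ω] [CompactSpace Ω] (φ : Ω → Ω)
    (hφ : Continuous φ) : Prop :=
  ∀ (x : C(Ω, ℝ)) (n : ℕ → ℕ), StrictMono n →
    sInf {r : ℝ | ∃ a : ℕ →₀ ℝ, (∑ k ∈ a.support, |a k|) = 1 ∧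
      r = ‖∑ k ∈ a.support, a k • x.comp ⟨φ^[n k], hφ.iterate (n k)⟩‖} = 0

/-- Points `a, b` are proximal: `inf_{n ≥ 0} d(φⁿ a, φⁿ b) = 0`. -/
def Proximal {Ω : Type*} [PseudoMetricSpace Ω] (φ : Ω → Ω) (a b : Ω) : Prop :=
  (⨅ n : ℕ, dist (φ^[n] a) (φ^[n] b)) = 0

variable {Ω : Type*} [TopologicalSpace Ω] [CompactSpace Ω] [TopologicalSpace.MetrizableSpace Ω]
  [Nonempty Ω] [MeasurableSpace Ω] [BorelSpace Ω]

/-!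
The coefficients `n ↦ ⟨x, Vⁿμ⟩` extend continuously to `βℕ`, so the elements of `G(Ω, φ)` are the
averages of the iterates of `V` against probability measures `m` on `βℕ`. Such an average is fixed
by `V` as soon as `m` is shift-invariant, and by the Markov–Kakutani argument every `Q ∈ L` arises
in this way. If `p : βℕ → Ω` extends the orbit of `ω`, then `Qδ(ω) = p_* m`. Given an invariant set
`e` with `0 < p_* m(e) < 1`, conditioning `m` on `p⁻¹ e` and on its complement writes `Q` as a
proper convex combination of elements of `L`. When `Q` is extreme, conditioning on `p⁻¹ e` must
then leave `p_* m = Qδ(ω)` unchanged, which forces `p_* m(e) = 1`.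
-/

section Pairing

variable {X : Type*} [MeasurableSpace X]

instance isFiniteMeasure_variation (μ : SignedMeasure X) : IsFiniteMeasure μ.variation := by
  rw [← SignedMeasure.totalVariation_eq_variation]
  exact inferInstanceAs (IsFiniteMeasure (_ + _))

variable [TopologicalSpace X] [CompactSpace X] [OpensMeasurableSpace X]

lemma integrable_of_compactSpace (x : C(X, ℝ)) (m : Measure X) [IsFiniteMeasure m] :
    Integrable x m :=
  (BoundedContinuousFunction.mkOfCompact x).integrable m

lemma spair_eq_integral (x : C(X, ℝ)) (μ : SignedMeasure X) : spair x μ = ∫ᵛ ω, x ω ∂<•μ := by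
  conv_rhs => rw [← μ.toSignedMeasure_toJordanDecomposition]
  rw [JordanDecomposition.toSignedMeasure, VectorMeasure.integral_sub_vectorMeasure,
    VectorMeasure.integral_toSignedMeasure, VectorMeasure.integral_toSignedMeasure, spair]
  all_goals exact integrable_of_compactSpace x _

lemma spair_toSignedMeasure (x : C(X, ℝ)) (m : Measure X) [IsFiniteMeasure m] :
    spair x m.toSignedMeasure = ∫ ω, x ω ∂m := by
  rw [spair_eq_integral, VectorMeasure.integral_toSignedMeasure]

lemma abs_spair_le (x : C(X, ℝ)) (μ : SignedMeasure X) :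
    |spair x μ| ≤ ‖x‖ * μ.variation.real Set.univ := by
  rw [spair_eq_integral]
  have h := VectorMeasure.norm_integral_le_of_norm_le_const (μ := μ)
    (B := (ContinuousLinearMap.lsmul ℝ ℝ).flip) (.of_forall x.norm_coe_le_norm)
  simpa using h

/-- The pairing `⟨x, μ⟩ = ∫ x dμ`, as a bilinear map. -/
noncomputable def pairing (X : Type*) [MeasurableSpace X] [TopologicalSpace X] [CompactSpace X]
    [OpensMeasurableSpace X] : SignedMeasure X →ₗ[ℝ] C(X, ℝ) →ₗ[ℝ] ℝ :=
  LinearMap.mk₂ ℝ (fun μ x => spair x μ)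
    (fun μ ν x => by
      simp only [spair_eq_integral]
      exact VectorMeasure.integral_add_vectorMeasure (integrable_of_compactSpace x _)
        (integrable_of_compactSpace x _))
    (fun c μ x => by
      simp only [spair_eq_integral]
      exact VectorMeasure.integral_smul_vectorMeasure x c)
    (fun μ x y => by
      simp only [spair_eq_integral]
      exact VectorMeasure.integral_fun_add (integrable_of_compactSpace x _)
        (integrable_of_compactSpace y _))
    (fun c μ x => by
      simp only [spair_eq_integral]
      exact VectorMeasure.integral_fun_smul μ _ c x)

lemma pairing_apply (μ : SignedMeasure X) (x : C(X, ℝ)) : pairing X μ x = spair x μ := rfl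

end Pairing

section PairingBorel

variable {X : Type*} [TopologicalSpace X] [CompactSpace X] [MeasurableSpace X] [BorelSpace X]

lemma pairing_Vop (φ : C(X, X)) (μ : SignedMeasure X) (x : C(X, ℝ)) :
    pairing X (Vop φ μ) x = pairing X μ (x.comp φ) := by
  rw [pairing_apply, pairing_apply, spair_eq_integral, spair_eq_integral, Vop,
    VectorMeasure.integral_map φ.measurable]
  · rfl
  · exact x.measurable.aestronglyMeasurable
  · exact integrable_of_compactSpace (x.comp φ) _

lemma pairing_injective [HasOuterApproxClosed X] : Function.Injective (pairing X) := by
  rw [injective_iff_map_eq_zero]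
  intro μ hμ
  set j := μ.toJordanDecomposition with hj
  have h : j.posPart = j.negPart := ext_of_forall_integral_eq_of_IsFiniteMeasure fun f =>
    sub_eq_zero.1 (DFunLike.congr_fun hμ f.toContinuousMap)
  rw [← μ.toSignedMeasure_toJordanDecomposition, ← hj, JordanDecomposition.toSignedMeasure,
    Measure.toSignedMeasure_congr h, sub_self]

end PairingBorel

section FixedPoint

open scoped Pointwise

lemma birkhoffAverage_mem {E : Type*} [AddCommGroup E] [Module ℝ E] {S : Set E}
    (hS : Convex ℝ S) {T : E → E} (hT : Set.MapsTo T S S) {p : E} (hp : p ∈ S) {n : ℕ}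
    (hn : n ≠ 0) : birkhoffAverage ℝ T id n p ∈ S := by
  rw [birkhoffAverage, birkhoffSum, Finset.smul_sum]
  refine hS.sum_mem (fun _ _ => by positivity) ?_ fun k _ => hT.iterate k hp
  simp [hn]

variable {E : Type*} [AddCommGroup E] [Module ℝ E] [TopologicalSpace E] [IsTopologicalAddGroup E]

lemma tendsto_birkhoffAverage_apply_sub {S : Set E} (hS : Bornology.IsVonNBounded ℝ S) {T : E → E}
    (hT : Set.MapsTo T S S) {p : E} (hp : p ∈ S) :
    Tendsto (fun n : ℕ => birkhoffAverage ℝ T id n (T p) - birkhoffAverage ℝ T id n p)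
      atTop (𝓝 0) := by
  have hbdd : Bornology.IsVonNBounded ℝ (S - S) := hS.sub hS
  simp only [birkhoffAverage_apply_sub_birkhoffAverage]
  exact hbdd.smul_tendsto_zero (.of_forall fun n => Set.sub_mem_sub (hT.iterate n hp) hp)
    tendsto_inv_atTop_nhds_zero_nat

theorem exists_isFixedPt_of_isCompact_convex [ContinuousSMul ℝ E] [T2Space E] {S : Set E}
    (hne : S.Nonempty) (hS : IsCompact S) (hconv : Convex ℝ S) (T : E →L[ℝ] E)
    (hT : Set.MapsTo T S S) : ∃ p ∈ S, Function.IsFixedPt T p := by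
  obtain ⟨q, hq⟩ := hne
  let avg : ℕ → E := fun n => birkhoffAverage ℝ T id n q
  have havg : ∀ᶠ n in hyperfilter ℕ, avg n ∈ S :=
    Nat.hyperfilter_le_atTop <| (eventually_ne_atTop 0).mono fun n hn =>
      birkhoffAverage_mem hconv hT hq hn
  obtain ⟨p, hp, hlim⟩ := hS.ultrafilter_le_nhds ((hyperfilter ℕ).map avg)
    (le_principal_iff.2 havg)
  have hTavg : ∀ n, T (avg n) = birkhoffAverage ℝ T id n (T q) := fun n => by
    simp [avg, birkhoffAverage, birkhoffSum, map_sum, ← Function.iterate_succ_apply,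
      Function.iterate_succ_apply']
  have hdiff : Tendsto (fun n => T (avg n) - avg n) (hyperfilter ℕ) (𝓝 0) := by
    simp only [hTavg]
    exact (tendsto_birkhoffAverage_apply_sub (hS.isVonNBounded ℝ) hT hq).mono_left
      Nat.hyperfilter_le_atTop
  exact ⟨p, hp, sub_eq_zero.1 <| tendsto_nhds_unique
    (((T.continuous.tendsto p).comp hlim).sub hlim) hdiff⟩

end FixedPoint

section StateSpace

variable {K : Type*} [TopologicalSpace K]

/-- The functional `f ↦ f k` on `C(K, ℝ)`. -/
noncomputable def evalState (k : K) : WeakDual ℝ C(K, ℝ) :=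
  StrongDual.toWeakDual (ContinuousMap.evalCLM ℝ k)

/-- The pushforward of functionals on `C(K, ℝ)` by `σ`, i.e. `Λ ↦ (f ↦ Λ (f ∘ σ))`. -/
noncomputable def pushState (σ : C(K, K)) :
    WeakDual ℝ C(K, ℝ) →L[ℝ] WeakDual ℝ C(K, ℝ) where
  toFun Λ := StrongDual.toWeakDual ((WeakDual.toStrongDual Λ).comp
    ⟨(ContinuousMap.compRightAlgHom ℝ ℝ σ).toLinearMap,
      ContinuousMap.compRightAlgHom_continuous ℝ ℝ σ⟩)
  map_add' _ _ := rfl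
  map_smul' _ _ := rfl
  cont := WeakDual.continuous_of_continuous_eval fun f => WeakDual.eval_continuous (f.comp σ)

lemma pushState_apply (σ : C(K, K)) (Λ : WeakDual ℝ C(K, ℝ)) (f : C(K, ℝ)) :
    pushState σ Λ f = Λ (f.comp σ) := rfl

/-- The states of `C(K, ℝ)`: its positive unital functionals, with the weak* topology. For
compact `K` they stand for the regular Borel probability measures on `K`. -/
def stateSpace (K : Type*) [TopologicalSpace K] : Set (WeakDual ℝ C(K, ℝ)) :=
  {Λ | (∀ f, 0 ≤ f → 0 ≤ Λ f) ∧ Λ 1 = 1}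

lemma evalState_mem_stateSpace (k : K) : evalState k ∈ stateSpace K :=
  ⟨fun _ hf => hf k, rfl⟩

lemma convex_stateSpace : Convex ℝ (stateSpace K) := by
  rintro Λ₁ ⟨hΛ₁, h₁⟩ Λ₂ ⟨hΛ₂, h₂⟩ a b ha hb hab
  refine ⟨fun f hf => ?_, ?_⟩
  · exact add_nonneg (mul_nonneg ha (hΛ₁ f hf)) (mul_nonneg hb (hΛ₂ f hf))
  · change a * Λ₁ 1 + b * Λ₂ 1 = 1
    rw [h₁, h₂, mul_one, mul_one, hab]

lemma isClosed_stateSpace : IsClosed (stateSpace K) := by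
  have hset : stateSpace K = (⋂ f : C(K, ℝ), ⋂ _ : 0 ≤ f, {Λ | 0 ≤ Λ f}) ∩ {Λ | Λ 1 = 1} := by
    ext Λ
    simp [stateSpace]
  rw [hset]
  exact (isClosed_iInter fun f => isClosed_iInter fun _ =>
    isClosed_le continuous_const (WeakDual.eval_continuous f)).inter
    (isClosed_eq (WeakDual.eval_continuous 1) continuous_const)

lemma stateSpace.mono {Λ : WeakDual ℝ C(K, ℝ)} (hΛ : Λ ∈ stateSpace K) {f g : C(K, ℝ)}
    (hfg : f ≤ g) : Λ f ≤ Λ g := by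
  simpa [map_sub] using hΛ.1 (g - f) (sub_nonneg.2 hfg)

lemma stateSpace.apply_le {Λ : WeakDual ℝ C(K, ℝ)} (hΛ : Λ ∈ stateSpace K) {f : C(K, ℝ)} {c : ℝ}
    (hf : ∀ k, f k ≤ c) : Λ f ≤ c := by
  have h : Λ f ≤ Λ (c • 1) := stateSpace.mono hΛ fun k => by simpa using hf k
  simpa [hΛ.2] using h

lemma isCompact_stateSpace [CompactSpace K] : IsCompact (stateSpace K) := by
  refine (WeakDual.isCompact_closedBall 0 1).of_isClosed_subset isClosed_stateSpace fun Λ hΛ => ?_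
  rw [Set.mem_preimage, mem_closedBall_zero_iff]
  refine ContinuousLinearMap.opNorm_le_bound _ zero_le_one fun f => ?_
  rw [one_mul, Real.norm_eq_abs, abs_le']
  have hneg : Λ (-f) ≤ ‖f‖ := stateSpace.apply_le hΛ fun k => by
    simpa using (neg_le_abs (f k)).trans (f.norm_coe_le_norm k)
  exact ⟨stateSpace.apply_le hΛ fun k => (le_abs_self (f k)).trans (f.norm_coe_le_norm k),
    by simpa using hneg⟩

theorem closure_convexHull_range_evalState {ι : Type*} {u : ι → K} (hu : DenseRange u) :
    closure (convexHull ℝ (Set.range fun i => evalState (u i))) = stateSpace K := by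
  refine (closure_minimal (convexHull_min ?_ convex_stateSpace) isClosed_stateSpace).antisymm
    fun Λ hΛ => ?_
  · rintro _ ⟨i, rfl⟩
    exact evalState_mem_stateSpace (u i)
  · by_contra hnot
    have : LocallyConvexSpace ℝ (WeakDual ℝ C(K, ℝ)) := WeakBilin.locallyConvexSpace
    obtain ⟨F, c, hFc, hF⟩ :=
      geometric_hahn_banach_closed_point (convex_convexHull ℝ _).closure isClosed_closure hnot
    obtain ⟨f, rfl⟩ := LinearMap.dualEmbedding_surjective (topDualPairing ℝ C(K, ℝ)) F
    refine absurd hF (not_lt.2 (stateSpace.apply_le hΛ fun k => ?_))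
    refine hu.induction_on (p := fun k => f k ≤ c) k
      (isClosed_le f.continuous continuous_const) fun i => ?_
    exact (hFc _ (subset_closure (subset_convexHull ℝ _ ⟨i, rfl⟩))).le

lemma mapsTo_pushState_stateSpace (σ : C(K, K)) :
    Set.MapsTo (pushState σ) (stateSpace K) (stateSpace K) :=
  fun _ hΛ => ⟨fun f hf => hΛ.1 (f.comp σ) fun k => hf (σ k), hΛ.2⟩

end StateSpace

section IntegralState

variable {K : Type*} [TopologicalSpace K] [CompactSpace K] [MeasurableSpace K]
  [OpensMeasurableSpace K]

lemma exists_mem_stateSpace_eq_integral (m : Measure K) [IsProbabilityMeasure m] :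
    ∃ Λ ∈ stateSpace K, ∀ f : C(K, ℝ), Λ f = ∫ k, f k ∂m := by
  let Λ : C(K, ℝ) →L[ℝ] ℝ := (pairing K m.toSignedMeasure).mkContinuous
    (m.toSignedMeasure.variation.real Set.univ) fun f => (abs_spair_le f _).trans_eq (mul_comm _ _)
  have hΛ : ∀ f, Λ f = ∫ k, f k ∂m := fun f => spair_toSignedMeasure f m
  refine ⟨StrongDual.toWeakDual Λ, ⟨fun f hf => ?_, ?_⟩, hΛ⟩
  · exact (integral_nonneg hf).trans_eq (hΛ f).symm
  · simpa using hΛ 1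

end IntegralState

section Riesz

variable {K : Type*} [TopologicalSpace K] [CompactSpace K] [T2Space K] [MeasurableSpace K]
  [BorelSpace K]

theorem exists_isFiniteMeasure_of_nonneg {Λ : C(K, ℝ) →ₗ[ℝ] ℝ} (hΛ : ∀ f, 0 ≤ f → 0 ≤ Λ f) :
    ∃ m : Measure K, IsFiniteMeasure m ∧ m.Regular ∧ ∀ f : C(K, ℝ), ∫ k, f k ∂m = Λ f := by
  let e := CompactlySupportedContinuousMap.continuousMapEquiv (α := K) (β := ℝ)
  let Λ' : CompactlySupportedContinuousMap K ℝ →ₚ[ℝ] ℝ := PositiveLinearMap.mk₀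
    { toFun := fun f => Λ f.toContinuousMap
      map_add' := fun f g => Λ.map_add f.toContinuousMap g.toContinuousMap
      map_smul' := fun c f => Λ.map_smul c f.toContinuousMap } fun f hf => hΛ _ hf
  exact ⟨RealRMK.rieszMeasure Λ', inferInstance, inferInstance,
    fun f => RealRMK.integral_rieszMeasure Λ' (e f)⟩

theorem exists_isProbabilityMeasure_of_mem_stateSpace {Λ : WeakDual ℝ C(K, ℝ)}
    (hΛ : Λ ∈ stateSpace K) :
    ∃ m : Measure K, IsProbabilityMeasure m ∧ m.Regular ∧ ∀ f : C(K, ℝ), ∫ k, f k ∂m = Λ f := by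
  obtain ⟨m, _, hreg, hm⟩ := exists_isFiniteMeasure_of_nonneg (Λ := (Λ : C(K, ℝ) →ₗ[ℝ] ℝ)) hΛ.1
  refine ⟨m, isProbabilityMeasure_iff_real.2 ?_, hreg, hm⟩
  simpa using (hm 1).trans hΛ.2

lemma measurePreserving_of_forall_integral_eq {m : Measure K} [IsFiniteMeasure m] [m.Regular]
    {σ : C(K, K)} (h : ∀ f : C(K, ℝ), ∫ k, f (σ k) ∂m = ∫ k, f k ∂m) : MeasurePreserving σ m m := by
  have := Measure.InnerRegularCompactLTTop.map_of_continuous (μ := m) σ.continuous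
  have : (m.map σ).Regular := inferInstance
  refine ⟨σ.measurable, Measure.ext_of_integral_eq_on_compactlySupported fun f => ?_⟩
  exact (integral_map σ.measurable.aemeasurable f.continuous.measurable.aestronglyMeasurable).trans
    (h f.toContinuousMap)

theorem exists_pairing_eq_of_nonneg {B : SignedMeasure K →ₗ[ℝ] C(K, ℝ) →ₗ[ℝ] ℝ}
    (hB : ∀ (m : Measure K) [IsFiniteMeasure m] (x : C(K, ℝ)), 0 ≤ x → 0 ≤ B m.toSignedMeasure x) :
    ∃ T : SignedMeasure K → SignedMeasure K, ∀ μ, pairing K (T μ) = B μ := by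
  have hmeasure : ∀ (m : Measure K) [IsFiniteMeasure m],
      ∃ ν, pairing K ν = B m.toSignedMeasure := by
    intro m _
    obtain ⟨n, _, -, hn⟩ := exists_isFiniteMeasure_of_nonneg (hB m)
    exact ⟨n.toSignedMeasure, LinearMap.ext fun x => (spair_toSignedMeasure x n).trans (hn x)⟩
  have hsigned : ∀ μ, ∃ ν, pairing K ν = B μ := by
    intro μ
    obtain ⟨ν₁, h₁⟩ := hmeasure μ.toJordanDecomposition.posPart
    obtain ⟨ν₂, h₂⟩ := hmeasure μ.toJordanDecomposition.negPart
    refine ⟨ν₁ - ν₂, ?_⟩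
    rw [map_sub, h₁, h₂, ← map_sub]
    exact congrArg B μ.toSignedMeasure_toJordanDecomposition
  exact ⟨_, fun μ => (hsigned μ).choose_spec⟩

end Riesz

section ConditionedMeasure

open scoped ProbabilityTheory

variable {K : Type*} [MeasurableSpace K] {m : Measure K} {E : Set K}

lemma measurePreserving_cond {σ : K → K} (hm : MeasurePreserving σ m m) (hE : MeasurableSet E)
    (hinv : σ ⁻¹' E = E) : MeasurePreserving σ m[|E] m[|E] := by
  have h := hm.restrict_preimage hE
  rw [hinv] at h
  exact h.smul_measure _

lemma measureReal_smul_integral_cond_add {F : Type*} [NormedAddCommGroup F] [NormedSpace ℝ F]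
    [IsFiniteMeasure m] {f : K → F} (hE : MeasurableSet E) (hf : Integrable f m) :
    m.real E • ∫ k, f k ∂m[|E] + m.real Eᶜ • ∫ k, f k ∂m[|Eᶜ] = ∫ k, f k ∂m := by
  have hcond : ∀ s, m.real s • ∫ k, f k ∂m[|s] = ∫ k in s, f k ∂m := by
    intro s
    rcases eq_or_ne (m s) 0 with hs | hs
    · simp [Measure.restrict_eq_zero.2 hs, measureReal_def, hs]
    · have hreal : m.real s ≠ 0 := (measureReal_ne_zero_iff (measure_ne_top m s)).2 hs
      rw [ProbabilityTheory.cond, integral_smul_measure, ENNReal.toReal_inv, ← measureReal_def,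
        smul_inv_smul₀ hreal]
  rw [hcond, hcond, integral_add_compl hE hf]

end ConditionedMeasure

section StoneCech

/-- The extension of a bounded continuous function to the Stone–Čech compactification. -/
noncomputable def stoneCechLift {α : Type*} [TopologicalSpace α]
    (f : BoundedContinuousFunction α ℝ) : C(StoneCech α, ℝ) :=
  have hg : Continuous fun a => (⟨f a, abs_le.1 (f.norm_coe_le_norm a)⟩ : Set.Icc (-‖f‖) ‖f‖) :=
    f.continuous.subtype_mk _
  ⟨Subtype.val ∘ stoneCechExtend hg, continuous_subtype_val.comp (continuous_stoneCechExtend hg)⟩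

lemma stoneCechLift_stoneCechUnit {α : Type*} [TopologicalSpace α]
    (f : BoundedContinuousFunction α ℝ) (a : α) : stoneCechLift f (stoneCechUnit a) = f a :=
  congrArg Subtype.val (stoneCechExtend_stoneCechUnit (f.continuous.subtype_mk _) a)

lemma ext_stoneCechUnit {α Y : Type*} [TopologicalSpace α] [TopologicalSpace Y] [T2Space Y]
    {f g : C(StoneCech α, Y)} (h : ∀ a, f (stoneCechUnit a) = g (stoneCechUnit a)) : f = g :=
  DFunLike.coe_injective (stoneCech_hom_ext f.continuous g.continuous (funext h))

/-- The extension to `βℕ` of the sequence `u`. -/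
noncomputable def stoneCechNatLift {Y : Type*} [TopologicalSpace Y] [CompactSpace Y] [T2Space Y]
    (u : ℕ → Y) : C(StoneCech ℕ, Y) :=
  ⟨stoneCechExtend (g := u) continuous_of_discreteTopology, continuous_stoneCechExtend _⟩

lemma stoneCechNatLift_stoneCechUnit {Y : Type*} [TopologicalSpace Y] [CompactSpace Y] [T2Space Y]
    (u : ℕ → Y) (n : ℕ) : stoneCechNatLift u (stoneCechUnit n) = u n :=
  stoneCechExtend_stoneCechUnit continuous_of_discreteTopology n

/-- The shift of `βℕ`, i.e. the extension of `n ↦ n + 1`. -/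
noncomputable def stoneCechShift : C(StoneCech ℕ, StoneCech ℕ) :=
  stoneCechNatLift fun n => stoneCechUnit (n + 1)

lemma stoneCechShift_stoneCechUnit (n : ℕ) :
    stoneCechShift (stoneCechUnit n) = stoneCechUnit (n + 1) :=
  stoneCechNatLift_stoneCechUnit _ n

end StoneCech

section Orbit

variable {X : Type*} [TopologicalSpace X]

/-- The iterate `φⁿ` as a continuous map. -/
def iterateMap (φ : C(X, X)) (n : ℕ) : C(X, X) :=
  ⟨φ^[n], φ.continuous.iterate n⟩

lemma iterateMap_succ (φ : C(X, X)) (n : ℕ) :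
    iterateMap φ (n + 1) = φ.comp (iterateMap φ n) :=
  ContinuousMap.ext fun _ => Function.iterate_succ_apply' φ n _

variable [CompactSpace X] [T2Space X]

/-- The continuous extension to `βℕ` of the orbit `n ↦ φⁿ ω`. -/
noncomputable def orbitLift (φ : C(X, X)) (ω : X) : C(StoneCech ℕ, X) :=
  stoneCechNatLift fun n => iterateMap φ n ω

lemma orbitLift_stoneCechShift (φ : C(X, X)) (ω : X) (k : StoneCech ℕ) :
    orbitLift φ ω (stoneCechShift k) = φ (orbitLift φ ω k) := by
  refine DFunLike.congr_fun (f := (orbitLift φ ω).comp stoneCechShift) (g := φ.comp (orbitLift φ ω))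
    (ext_stoneCechUnit fun n => ?_) k
  simp only [ContinuousMap.comp_apply, stoneCechShift_stoneCechUnit, orbitLift,
    stoneCechNatLift_stoneCechUnit, iterateMap_succ]

end Orbit

section OrbitMap

variable {X : Type*} [TopologicalSpace X] [CompactSpace X] [MeasurableSpace X] [BorelSpace X]

lemma pairing_iterate_Vop (φ : C(X, X)) (n : ℕ) (μ : SignedMeasure X) (x : C(X, ℝ)) :
    pairing X ((Vop φ)^[n] μ) x = pairing X μ (x.comp (iterateMap φ n)) := by
  induction n generalizing x with
  | zero => rfl
  | succ n ih =>
    rw [Function.iterate_succ_apply', pairing_Vop, ih, ContinuousMap.comp_assoc, iterateMap_succ]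

lemma abs_pairing_comp_le (φ : C(X, X)) (μ : SignedMeasure X) (x : C(X, ℝ)) :
    |pairing X μ (x.comp φ)| ≤ ‖x‖ * μ.variation.real Set.univ :=
  (abs_spair_le _ μ).trans <| mul_le_mul_of_nonneg_right
    ((ContinuousMap.norm_le _ (norm_nonneg x)).2 fun ω => x.norm_coe_le_norm (φ ω))
    measureReal_nonneg

/-- The bounded sequence `n ↦ ⟨x, Vⁿμ⟩ = ⟨x ∘ φⁿ, μ⟩`. -/
noncomputable def orbitSeq (φ : C(X, X)) (μ : SignedMeasure X) (x : C(X, ℝ)) :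
    BoundedContinuousFunction ℕ ℝ :=
  .ofNormedAddCommGroupDiscrete (fun n => pairing X μ (x.comp (iterateMap φ n))) _
    fun n => abs_pairing_comp_le (iterateMap φ n) μ x

/-- The bilinear map sending `(μ, x)` to the continuous extension to `βℕ` of `n ↦ ⟨x, Vⁿμ⟩`. -/
noncomputable def orbitMap (φ : C(X, X)) :
    SignedMeasure X →ₗ[ℝ] C(X, ℝ) →ₗ[ℝ] C(StoneCech ℕ, ℝ) :=
  LinearMap.mk₂ ℝ (fun μ x => stoneCechLift (orbitSeq φ μ x))
    (fun μ ν x => ext_stoneCechUnit fun n => by simp [stoneCechLift_stoneCechUnit, orbitSeq])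
    (fun c μ x => ext_stoneCechUnit fun n => by simp [stoneCechLift_stoneCechUnit, orbitSeq])
    (fun μ x y => ext_stoneCechUnit fun n => by
      simp [stoneCechLift_stoneCechUnit, orbitSeq, ContinuousMap.add_comp])
    (fun c μ x => ext_stoneCechUnit fun n => by
      simp [stoneCechLift_stoneCechUnit, orbitSeq, ContinuousMap.smul_comp])

lemma orbitMap_stoneCechUnit (φ : C(X, X)) (μ : SignedMeasure X) (x : C(X, ℝ)) (n : ℕ) :
    orbitMap φ μ x (stoneCechUnit n) = pairing X μ (x.comp (iterateMap φ n)) :=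
  stoneCechLift_stoneCechUnit _ n

lemma orbitMap_comp (φ : C(X, X)) (μ : SignedMeasure X) (x : C(X, ℝ)) :
    orbitMap φ μ (x.comp φ) = (orbitMap φ μ x).comp stoneCechShift :=
  ext_stoneCechUnit fun n => by
    rw [ContinuousMap.comp_apply, stoneCechShift_stoneCechUnit, orbitMap_stoneCechUnit,
      orbitMap_stoneCechUnit, ContinuousMap.comp_assoc, iterateMap_succ]

lemma orbitMap_nonneg (φ : C(X, X)) (m : Measure X) [IsFiniteMeasure m] {x : C(X, ℝ)}
    (hx : 0 ≤ x) : 0 ≤ orbitMap φ m.toSignedMeasure x := fun k => by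
  refine denseRange_stoneCechUnit.induction_on
    (p := fun k => 0 ≤ orbitMap φ m.toSignedMeasure x k) k
    (isClosed_le continuous_const (ContinuousMap.continuous _)) fun n => ?_
  rw [orbitMap_stoneCechUnit, pairing_apply, spair_toSignedMeasure]
  exact integral_nonneg fun ω => hx _

lemma orbitMap_diracSM [T2Space X] (φ : C(X, X)) (ω : X) (x : C(X, ℝ)) :
    orbitMap φ (diracSM ω) x = x.comp (orbitLift φ ω) :=
  ext_stoneCechUnit fun n => by
    rw [orbitMap_stoneCechUnit, ContinuousMap.comp_apply, orbitLift,
      stoneCechNatLift_stoneCechUnit, pairing_apply, diracSM, spair_toSignedMeasure, integral_dirac]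
    rfl

end OrbitMap

section Semigroup

/-- The map sending an operator `T` on signed measures to its coefficients `⟨x, Tμ⟩`. -/
noncomputable def coeffMap (X : Type*) [TopologicalSpace X] [CompactSpace X] [MeasurableSpace X]
    [OpensMeasurableSpace X] :
    (SignedMeasure X → SignedMeasure X) →ₗ[ℝ] (SignedMeasure X × C(X, ℝ) → ℝ) where
  toFun T p := pairing X (T p.1) p.2
  map_add' S T := by ext p; simp
  map_smul' c T := by ext p; simp

lemma isInducing_coeffMap {X : Type*} [TopologicalSpace X] [CompactSpace X] [MeasurableSpace X]
    [OpensMeasurableSpace X] : IsInducing (coeffMap X) := by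
  constructor
  change (⨅ μ, TopologicalSpace.induced _ (TopologicalSpace.induced _
    (⨅ x, TopologicalSpace.induced _ _))) =
      TopologicalSpace.induced _ (⨅ p, TopologicalSpace.induced _ _)
  simp only [induced_iInf, induced_compose, iInf_prod]
  rfl

variable {X : Type*} [TopologicalSpace X] [CompactSpace X] [MeasurableSpace X] [BorelSpace X]

/-- The map sending a functional `Λ` on `C(βℕ)` to the coefficients `Λ(⟨x, Vⁿμ⟩)` of the
corresponding average of the operators `Vⁿ`. -/
noncomputable def averageMap (φ : C(X, X)) :
    WeakDual ℝ C(StoneCech ℕ, ℝ) →L[ℝ] (SignedMeasure X × C(X, ℝ) → ℝ) where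
  toFun Λ p := Λ (orbitMap φ p.1 p.2)
  map_add' _ _ := rfl
  map_smul' _ _ := rfl
  cont := continuous_pi fun p => WeakDual.eval_continuous (orbitMap φ p.1 p.2)

lemma coeffMap_iterate_Vop (φ : C(X, X)) (n : ℕ) :
    coeffMap X (Vop φ)^[n] = averageMap φ (evalState (stoneCechUnit n)) := by
  ext p
  exact (pairing_iterate_Vop φ n p.1 p.2).trans (orbitMap_stoneCechUnit φ p.1 p.2 n).symm

theorem GSG_eq_preimage (φ : C(X, X)) :
    GSG φ = coeffMap X ⁻¹' (averageMap φ '' stateSpace (StoneCech ℕ)) := by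
  have hcompact : IsCompact (closure (convexHull ℝ
      (Set.range fun n : ℕ => evalState (stoneCechUnit n)))) := by
    rw [closure_convexHull_range_evalState denseRange_stoneCechUnit]
    exact isCompact_stateSpace
  rw [GSG, isInducing_coeffMap.closure_eq_preimage_closure_image,
    ← closure_convexHull_range_evalState denseRange_stoneCechUnit,
    image_closure_of_isCompact hcompact (averageMap φ).continuous.continuousOn,
    (coeffMap X).image_convexHull, ← ContinuousLinearMap.coe_coe (averageMap φ),
    LinearMap.image_convexHull]
  simp only [← Set.range_comp, Function.comp_def, coeffMap_iterate_Vop, ContinuousLinearMap.coe_coe]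

lemma averageMap_pushState_stoneCechShift {φ : C(X, X)} {T : SignedMeasure X → SignedMeasure X}
    (hT : Vop φ ∘ T = T) {Λ : WeakDual ℝ C(StoneCech ℕ, ℝ)} (hΛ : averageMap φ Λ = coeffMap X T) :
    averageMap φ (pushState stoneCechShift Λ) = coeffMap X T := by
  ext ⟨μ, x⟩
  calc Λ ((orbitMap φ μ x).comp stoneCechShift)
      = Λ (orbitMap φ μ (x.comp φ)) := by rw [orbitMap_comp]
    _ = pairing X (T μ) (x.comp φ) := congrFun hΛ (μ, x.comp φ)
    _ = pairing X ((Vop φ ∘ T) μ) x := (pairing_Vop φ (T μ) x).symm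
    _ = pairing X (T μ) x := by rw [hT]

theorem exists_isFixedPt_pushState_of_mem_Lker {φ : C(X, X)}
    {T : SignedMeasure X → SignedMeasure X} (hT : T ∈ Lker φ) :
    ∃ Λ ∈ stateSpace (StoneCech ℕ), Function.IsFixedPt (pushState stoneCechShift) Λ ∧
      averageMap φ Λ = coeffMap X T := by
  let S := stateSpace (StoneCech ℕ) ∩ averageMap φ ⁻¹' {coeffMap X T}
  have hS : S.Nonempty := by
    have hTG := hT.1
    rw [GSG_eq_preimage] at hTG
    exact hTG
  have hcompact : IsCompact S :=
    isCompact_stateSpace.inter_right (isClosed_singleton.preimage (averageMap φ).continuous)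
  have hconvex : Convex ℝ S := convex_stateSpace.inter
    ((convex_singleton _).linear_preimage (averageMap φ).toLinearMap)
  obtain ⟨Λ, ⟨hΛ, hav⟩, hfix⟩ := exists_isFixedPt_of_isCompact_convex hS hcompact hconvex
    (pushState stoneCechShift) fun Λ hΛ => ⟨mapsTo_pushState_stateSpace _ hΛ.1,
      averageMap_pushState_stoneCechShift hT.2 hΛ.2⟩
  exact ⟨Λ, hΛ, hfix, hav⟩

end Semigroup

section OrbitAverage

open scoped ProbabilityTheory

variable {X : Type*} [TopologicalSpace X] [CompactSpace X] [MeasurableSpace X] [BorelSpace X]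
  [MeasurableSpace (StoneCech ℕ)]

/-- `T` is the average `∫ Vᵏ dm(k)` over `βℕ` of the iterates of `V`, in the weak sense that
`⟨x, Tμ⟩ = ∫ ⟨x, Vᵏμ⟩ dm(k)` for all `μ` and `x`. -/
def IsOrbitAverage (φ : C(X, X)) (m : Measure (StoneCech ℕ))
    (T : SignedMeasure X → SignedMeasure X) : Prop :=
  ∀ μ x, pairing X (T μ) x = ∫ k, orbitMap φ μ x k ∂m

lemma IsOrbitAverage.unique [HasOuterApproxClosed X] {φ : C(X, X)} {m : Measure (StoneCech ℕ)}
    {T T' : SignedMeasure X → SignedMeasure X} (hT : IsOrbitAverage φ m T)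
    (hT' : IsOrbitAverage φ m T') : T = T' :=
  funext fun μ => pairing_injective <| LinearMap.ext fun x => (hT μ x).trans (hT' μ x).symm

variable [BorelSpace (StoneCech ℕ)]

lemma exists_isOrbitAverage [T2Space X] (φ : C(X, X)) (m : Measure (StoneCech ℕ))
    [IsFiniteMeasure m] : ∃ T, IsOrbitAverage φ m T := by
  obtain ⟨T, hT⟩ := exists_pairing_eq_of_nonneg
    (B := (orbitMap φ).compr₂ (pairing (StoneCech ℕ) m.toSignedMeasure)) fun μ _ x hx =>
      (integral_nonneg (orbitMap_nonneg φ μ hx)).trans_eq (spair_toSignedMeasure _ m).symm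
  exact ⟨T, fun μ x => (DFunLike.congr_fun (hT μ) x).trans (spair_toSignedMeasure _ m)⟩

theorem exists_isOrbitAverage_of_mem_Lker {φ : C(X, X)} {T : SignedMeasure X → SignedMeasure X}
    (hT : T ∈ Lker φ) :
    ∃ m, IsProbabilityMeasure m ∧ MeasurePreserving stoneCechShift m m ∧ IsOrbitAverage φ m T := by
  obtain ⟨Λ, hΛ, hfix, hav⟩ := exists_isFixedPt_pushState_of_mem_Lker hT
  obtain ⟨m, hprob, _, hm⟩ := exists_isProbabilityMeasure_of_mem_stateSpace hΛ
  refine ⟨m, hprob, measurePreserving_of_forall_integral_eq fun f => ?_, fun μ x => ?_⟩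
  · calc ∫ k, f (stoneCechShift k) ∂m = Λ (f.comp stoneCechShift) := hm (f.comp stoneCechShift)
      _ = Λ f := by rw [← pushState_apply, hfix.eq]
      _ = ∫ k, f k ∂m := (hm f).symm
  · exact (congrFun hav (μ, x)).symm.trans (hm _).symm

variable [HasOuterApproxClosed X] {φ : C(X, X)} {m : Measure (StoneCech ℕ)}
  {T : SignedMeasure X → SignedMeasure X}

theorem IsOrbitAverage.mem_Lker [IsProbabilityMeasure m] (hT : IsOrbitAverage φ m T)
    (hm : MeasurePreserving stoneCechShift m m) : T ∈ Lker φ := by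
  refine ⟨?_, IsOrbitAverage.unique (fun μ x => ?_) hT⟩
  · obtain ⟨Λ, hΛ, hΛm⟩ := exists_mem_stateSpace_eq_integral m
    rw [GSG_eq_preimage]
    exact ⟨Λ, hΛ, funext fun p => (hΛm _).trans (hT p.1 p.2).symm⟩
  · calc pairing X (Vop φ (T μ)) x = ∫ k, orbitMap φ μ x (stoneCechShift k) ∂m := by
          rw [pairing_Vop, hT, orbitMap_comp]
          rfl
      _ = ∫ k, orbitMap φ μ x k ∂m :=
          hm.hasLaw.integral_comp (ContinuousMap.measurable _).aestronglyMeasurable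

lemma IsOrbitAverage.apply_diracSM [T2Space X] [IsFiniteMeasure m] (hT : IsOrbitAverage φ m T)
    (ω : X) : T (diracSM ω) = (m.map (orbitLift φ ω)).toSignedMeasure := by
  refine pairing_injective <| LinearMap.ext fun x => ?_
  rw [hT, orbitMap_diracSM, pairing_apply, spair_toSignedMeasure,
    integral_map (orbitLift φ ω).measurable.aemeasurable x.measurable.aestronglyMeasurable]
  rfl

theorem IsOrbitAverage.cond_of_mem_extremePoints [T2Space X] [IsProbabilityMeasure m]
    (hT : IsOrbitAverage φ m T) (hext : T ∈ Set.extremePoints ℝ (Lker φ))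
    (hm : MeasurePreserving stoneCechShift m m) {E : Set (StoneCech ℕ)} (hE : MeasurableSet E)
    (hinv : stoneCechShift ⁻¹' E = E) (h₀ : m E ≠ 0) (h₁ : m Eᶜ ≠ 0) :
    IsOrbitAverage φ m[|E] T := by
  have := ProbabilityTheory.cond_isProbabilityMeasure h₀
  have := ProbabilityTheory.cond_isProbabilityMeasure h₁
  obtain ⟨T₀, hT₀⟩ := exists_isOrbitAverage φ m[|E]
  obtain ⟨T₁, hT₁⟩ := exists_isOrbitAverage φ m[|Eᶜ]
  have hsplit : m.real E • T₀ + m.real Eᶜ • T₁ = T := by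
    refine IsOrbitAverage.unique (fun μ x => ?_) hT
    simp only [Pi.add_apply, Pi.smul_apply, map_add, map_smul, LinearMap.add_apply,
      LinearMap.smul_apply, hT₀ μ x, hT₁ μ x]
    exact measureReal_smul_integral_cond_add hE (integrable_of_compactSpace _ m)
  have heq : T₀ = T := hext.2 (hT₀.mem_Lker (measurePreserving_cond hm hE hinv))
    (hT₁.mem_Lker (measurePreserving_cond hm hE.compl (congrArg compl hinv)))
    ⟨m.real E, m.real Eᶜ, ENNReal.toReal_pos h₀ (measure_ne_top m _),
      ENNReal.toReal_pos h₁ (measure_ne_top m _), probReal_add_probReal_compl hE, hsplit⟩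
  exact heq ▸ hT₀

theorem IsOrbitAverage.isErgodicMeasure_map [T2Space X] [IsProbabilityMeasure m]
    (hT : IsOrbitAverage φ m T) (hext : T ∈ Set.extremePoints ℝ (Lker φ))
    (hm : MeasurePreserving stoneCechShift m m) (ω : X) :
    IsErgodicMeasure φ (m.map (orbitLift φ ω)) := by
  set p := orbitLift φ ω
  have hp : Measurable p := p.measurable
  have hshift : ∀ e, stoneCechShift ⁻¹' (p ⁻¹' e) = p ⁻¹' (φ ⁻¹' e) := fun e =>
    Set.ext fun k => by simp only [Set.mem_preimage, p, orbitLift_stoneCechShift]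
  refine ⟨Measure.isProbabilityMeasure_map hp.aemeasurable, fun e he => ?_, fun e he hinv => ?_⟩
  · rw [Measure.map_apply hp (φ.measurable he), Measure.map_apply hp he, ← hshift,
      hm.measure_preimage (hp he).nullMeasurableSet]
  · rw [Measure.map_apply hp he]
    by_contra! hne
    have hcompl : m (p ⁻¹' e)ᶜ ≠ 0 := (prob_compl_eq_zero_iff (hp he)).not.2 hne.2
    have hcond := hT.cond_of_mem_extremePoints hext hm (hp he)
      ((hshift e).trans (congrArg _ hinv)) hne.1 hcompl
    have hmap : (m.map p).toSignedMeasure = (m[|p ⁻¹' e].map p).toSignedMeasure :=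
      (hT.apply_diracSM ω).symm.trans (hcond.apply_diracSM ω)
    rw [Measure.toSignedMeasure_eq_toSignedMeasure_iff] at hmap
    refine hne.2 ?_
    rw [← Measure.map_apply hp he, hmap, Measure.map_apply hp he,
      ProbabilityTheory.cond_apply_self hne.1 (measure_ne_top m _)]

end OrbitAverage

theorem stmt_6_general {X : Type*} [TopologicalSpace X] [CompactSpace X] [T2Space X]
    [HasOuterApproxClosed X] [MeasurableSpace X] [BorelSpace X] (φ : X → X) (hφ : Continuous φ)
    (Q : SignedMeasure X → SignedMeasure X) (hQ : Q ∈ Set.extremePoints ℝ (Lker φ)) (ω : X) :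
    ∃ μ : Measure X, IsErgodicMeasure φ μ ∧
      ∀ e : Set X, MeasurableSet e → Q (diracSM ω) e = (μ e).toReal := by
  borelize (StoneCech ℕ)
  obtain ⟨m, _, hm, hQm⟩ := exists_isOrbitAverage_of_mem_Lker (φ := ⟨φ, hφ⟩) hQ.1
  refine ⟨m.map (orbitLift ⟨φ, hφ⟩ ω), hQm.isErgodicMeasure_map hQ hm ω, fun e he => ?_⟩
  rw [hQm.apply_diracSM, Measure.toSignedMeasure_apply_measurable he, measureReal_def]

/-- Proposition 1.11: if `Q` is an extreme point of the convex set `L`, then for every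
`ω ∈ Ω` the measure `Qδ(ω)` is a `φ`-ergodic Borel probability measure. -/
theorem stmt_6 (φ : Ω → Ω) (hφ : Continuous φ)
    (Q : SignedMeasure Ω → SignedMeasure Ω) (hQ : Q ∈ Set.extremePoints ℝ (Lker φ))
    (ω : Ω) :
    ∃ μ : Measure Ω, IsErgodicMeasure φ μ ∧
      ∀ e : Set Ω, MeasurableSet e → Q (diracSM ω) e = (μ e).toReal := by
  let := TopologicalSpace.metrizableSpaceMetric Ω
  exact stmt_6_general φ hφ Q hQ ω
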